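/- Let (A, 𝔪) be a finite local Gorenstein k-algebra. Then for every m ≥ 0, dim_k 𝔪^m/𝔪^{m+1} = dim_k (0 :_A 𝔪^{m+1})/(0 :_A 𝔪^m); that is, the local Hilbert function of A satisfies h_A(m) = dim_k ann(𝔪^{m+1})/ann(𝔪^m), where ann(I) = {a ∈ A : a·I = 0}. -/

import Mathlib

/-- `dim_k P/(P ∩ Q)`, the `k`-dimension of the image of the submodule `P` in `A/Q`. -/
noncomputable def subquotDim (k : Type*) {A : Type*} [Field k] [CommRing A] [Algebra k A]
    (P Q : Submodule A A) : ℕ :=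
  Module.finrank k (↥(P.restrictScalars k) ⧸
    (Submodule.comap (P.restrictScalars k).subtype (Q.restrictScalars k)))

/-- Iarrobino's `A_{m,n} = J^m ∩ (0 : J^n)`, with the convention `J^i = A` for `i ≤ 0`. -/
noncomputable def iaA {A : Type*} [CommRing A] (J : Ideal A) (m : ℕ) (n : ℤ) : Ideal A :=
  J ^ m ⊓ Submodule.torsionBySet A A ((J ^ n.toNat : Ideal A) : Set A)

/-- `dim_k Q_{m,n}` where `Q_{m,n} = A_{m,n}/(A_{m+1,n} + A_{m,n-1})`. -/
noncomputable def iaQdim (k : Type*) {A : Type*} [Field k] [CommRing A] [Algebra k A]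
    (J : Ideal A) (m : ℕ) (n : ℤ) : ℕ :=
  subquotDim k (iaA J m n) (iaA J (m + 1) n ⊔ iaA J m (n - 1))

/-- The Hilbert function decomposition `Δ_s(t) = dim_k Q_{t, j+1-(s+t)}` for `0 ≤ s ≤ j`,
`0 ≤ t ≤ j - s`, and `Δ_s(t) = 0` otherwise. -/
noncomputable def iaDelta (k : Type*) {A : Type*} [Field k] [CommRing A] [Algebra k A]
    (J : Ideal A) (j s t : ℕ) : ℕ :=
  if s ≤ j ∧ s + t ≤ j then iaQdim k J t ((j : ℤ) + 1 - (s + t)) else 0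

/-- The local Hilbert function `h(t) = dim_k J^t/J^(t+1)`. -/
noncomputable def hilbFn (k : Type*) {A : Type*} [Field k] [CommRing A] [Algebra k A]
    (J : Ideal A) (t : ℕ) : ℕ :=
  subquotDim k (J ^ t) (J ^ (t + 1))

/-!
Choose a `k`-linear functional `φ` on `A` which does not vanish on the one-dimensional socle. A
minimal nonzero ideal is killed by `𝔪`, so every nonzero ideal meets the socle nontrivially and
`ker φ` contains no nonzero ideal: the symmetric bilinear form `(x, y) ↦ φ (x * y)` is
nondegenerate. For this form the orthogonal complement of an ideal is its annihilator, so
`dim I + dim (0 : I) = dim A`, and `I ↦ (0 : I)` reverses inclusions and preserves the dimensions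
of subquotients, in particular of `𝔪 ^ m / 𝔪 ^ (m + 1)`.
-/

open Module Submodule IsLocalRing
open LinearMap (BilinForm)

theorem eq_bot_of_disjoint_torsionBySet_maximalIdeal {R M : Type*} [CommRing R] [IsLocalRing R]
    [AddCommGroup M] [Module R M] [IsArtinian R M] {N : Submodule R M}
    (h : Disjoint N (torsionBySet R M (maximalIdeal R : Set R))) : N = ⊥ := by
  by_contra hN
  obtain ⟨S, hS, hSN⟩ := (eq_bot_or_exists_atom_le N).resolve_left hN
  have : IsSimpleModule R S := isSimpleModule_iff_isAtom.2 hS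
  have hann : Module.annihilator R S = maximalIdeal R :=
    eq_maximalIdeal IsSimpleModule.annihilator_isMaximal
  have hsoc : S ≤ torsionBySet R M (maximalIdeal R : Set R) := fun x hx ↦
    (mem_torsionBySet_iff _ _).2 fun a ↦
      congrArg Subtype.val (Module.mem_annihilator.1 (hann.ge a.2) ⟨x, hx⟩)
  exact hS.ne_bot (le_bot_iff.1 (h hSN hsoc))

theorem exists_dual_disjoint_ker_of_finrank_eq_one {K V : Type*} [Field K] [AddCommGroup V]
    [Module K V] {W : Submodule K V} (hW : finrank K W = 1) :
    ∃ φ : Dual K V, Disjoint W φ.ker := by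
  obtain ⟨w, hw, hspan⟩ := finrank_eq_one_iff'.1 hW
  obtain ⟨φ, hφ⟩ : ∃ φ : Dual K V, φ w ≠ 0 :=
    not_forall.1 ((forall_dual_apply_eq_zero_iff K (w : V)).not.2 (by simpa using hw))
  refine ⟨φ, Submodule.disjoint_def.2 fun x hx hφx ↦ ?_⟩
  obtain ⟨c, hc⟩ := hspan ⟨x, hx⟩
  have hcx : c • (w : V) = x := congrArg Subtype.val hc
  have hc0 : c = 0 := by simpa [← hcx, hφ] using hφx
  rw [← hcx, hc0, zero_smul]

section FrobeniusForm

variable {R A : Type*} [CommRing R] [CommRing A] [Algebra R A]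

/-- The bilinear form `(x, y) ↦ φ (x * y)` attached to a linear functional `φ` on a commutative
algebra; over a field, `φ` is called a Frobenius form when this is nondegenerate. -/
def frobeniusForm (φ : Dual R A) : BilinForm R A :=
  (LinearMap.mul R A).compr₂ φ

@[simp]
theorem frobeniusForm_apply (φ : Dual R A) (x y : A) : frobeniusForm φ x y = φ (x * y) :=
  rfl

theorem isSymm_frobeniusForm (φ : Dual R A) : (frobeniusForm φ).IsSymm :=
  ⟨fun x y ↦ by simp [mul_comm]⟩

theorem nondegenerate_frobeniusForm [IsLocalRing A] [IsArtinianRing A] {φ : Dual R A}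
    (hφ : Disjoint ((torsionBySet A A (maximalIdeal A : Set A)).restrictScalars R) φ.ker) :
    (frobeniusForm φ).Nondegenerate := by
  refine (isSymm_frobeniusForm φ).isRefl.nondegenerate_iff_separatingLeft.2 fun x hx ↦ ?_
  have hker : (Ideal.span {x}).restrictScalars R ≤ φ.ker := fun z hz ↦ by
    obtain ⟨y, rfl⟩ := Ideal.mem_span_singleton'.1 hz
    simpa [mul_comm] using hx y
  have hdisj : Disjoint (Ideal.span {x}) (torsionBySet A A (maximalIdeal A : Set A)) :=
    Submodule.disjoint_def.2 fun z hz hsoc ↦ Submodule.disjoint_def.1 hφ z hsoc (hker hz)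
  exact Ideal.span_singleton_eq_bot.1 (eq_bot_of_disjoint_torsionBySet_maximalIdeal hdisj)

theorem orthogonal_frobeniusForm {φ : Dual R A} (hφ : (frobeniusForm φ).Nondegenerate)
    (I : Ideal A) :
    (frobeniusForm φ).orthogonal (I.restrictScalars R) =
      (torsionBySet A A (I : Set A)).restrictScalars R := by
  ext x
  simp only [BilinForm.mem_orthogonal_iff, frobeniusForm_apply,
    restrictScalars_mem, mem_torsionBySet_iff, Subtype.forall, SetLike.mem_coe, smul_eq_mul]
  refine ⟨fun h a ha ↦ hφ.1 _ fun y ↦ ?_, fun h a ha ↦ by rw [h a ha, map_zero]⟩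
  rw [frobeniusForm_apply, mul_right_comm]
  exact h _ (I.mul_mem_right y ha)

end FrobeniusForm

section Duality

variable {k A : Type*} [Field k] [CommRing A] [Algebra k A] [FiniteDimensional k A]

theorem exists_nondegenerate_frobeniusForm [IsLocalRing A]
    (hsoc : finrank k ((torsionBySet A A (maximalIdeal A : Set A)).restrictScalars k) = 1) :
    ∃ φ : Dual k A, (frobeniusForm φ).Nondegenerate :=
  have : IsArtinianRing A := .of_finite k A
  (exists_dual_disjoint_ker_of_finrank_eq_one hsoc).imp fun _ ↦ nondegenerate_frobeniusForm

theorem finrank_add_finrank_torsionBySet {φ : Dual k A} (hφ : (frobeniusForm φ).Nondegenerate)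
    (I : Ideal A) :
    finrank k (I.restrictScalars k) +
      finrank k ((torsionBySet A A (I : Set A)).restrictScalars k) = finrank k A := by
  rw [← orthogonal_frobeniusForm hφ, BilinForm.finrank_orthogonal hφ,
    Nat.add_sub_cancel' (finrank_le _)]

theorem subquotDim_add_finrank {P Q : Ideal A} (h : Q ≤ P) :
    subquotDim k P Q + finrank k (Q.restrictScalars k) = finrank k (P.restrictScalars k) := by
  have hQP : Q.restrictScalars k ≤ P.restrictScalars k := h
  rw [subquotDim, ← (comapSubtypeEquivOfLe hQP).finrank_eq, finrank_quotient_add_finrank]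

theorem subquotDim_torsionBySet {φ : Dual k A} (hφ : (frobeniusForm φ).Nondegenerate)
    {I J : Ideal A} (h : J ≤ I) :
    subquotDim k (torsionBySet A A (J : Set A)) (torsionBySet A A (I : Set A)) =
      subquotDim k I J := by
  have hann : torsionBySet A A (I : Set A) ≤ torsionBySet A A (J : Set A) :=
    torsionBySet_le_torsionBySet_of_subset h
  have hIJ := subquotDim_add_finrank (k := k) h
  have hIJ' := subquotDim_add_finrank (k := k) hann
  have hI := finrank_add_finrank_torsionBySet hφ I
  have hJ := finrank_add_finrank_torsionBySet hφ J
  omega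

end Duality

/-- Let `(A, 𝔪)` be a finite local Gorenstein `k`-algebra. Then for
every `m ≥ 0`, `dim_k 𝔪^m/𝔪^(m+1) = dim_k (0 :_A 𝔪^(m+1))/(0 :_A 𝔪^m)`; that is, the
local Hilbert function satisfies `h_A(m) = dim_k ann(𝔪^(m+1))/ann(𝔪^m)`. -/
theorem deformations_stmt11 {k A : Type*} [Field k]
    [CommRing A] [Algebra k A] [IsLocalRing A] [FiniteDimensional k A]
    -- the residue field A/𝔪 is k
    (hres : Function.Bijective (algebraMap k (IsLocalRing.ResidueField A)))
    -- the socle soc(A) has k-dimension 1 (A is Gorenstein)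
    (hsoc : Module.finrank k
      ↥((Submodule.torsionBySet A A
          ((IsLocalRing.maximalIdeal A : Ideal A) : Set A)).restrictScalars k) = 1) :
    ∀ m : ℕ,
      hilbFn k (IsLocalRing.maximalIdeal A) m =
        subquotDim k
          (Submodule.torsionBySet A A ((IsLocalRing.maximalIdeal A ^ (m + 1) : Ideal A) : Set A))
          (Submodule.torsionBySet A A ((IsLocalRing.maximalIdeal A ^ m : Ideal A) : Set A)) := by
  intro m
  obtain ⟨φ, hφ⟩ := exists_nondegenerate_frobeniusForm hsoc
  exact (subquotDim_torsionBySet hφ (Ideal.pow_le_pow_right m.le_succ)).symm
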